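/- arXiv:1605.07645 — 2 statements merged into one kernel-verified Lean document; each statement's English description precedes it below -/
import Mathlib

section
/- Let H be a real inner product space, let S be a finite index set, and let (V_j)_{j ∈ S} be subspaces of H that are pairwise orthogonal (i.e., ⟨x, y⟩ = 0 whenever x ∈ V_i, y ∈ V_j, i ≠ j). Let u, û, w ∈ H, and suppose that for each j ∈ S, φ_j ∈ V_j satisfies ⟨φ_j, v⟩ = ⟨u − w, v⟩ for all v ∈ V_j. Set Φ = Σ_{j ∈ S} φ_j, and suppose γ ≥ 0 satisfies γ·‖û − w‖² ≤ Σ_{j ∈ S} ‖φ_j‖². Then for every δ₁ > 0, ‖û − (w + Φ)‖² ≤ (1 + δ₁ − γ)·‖û − w‖² + (2 + 1/δ₁)·‖u − û‖². -/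
open RealInnerProductSpace

/-!
Write `x = uh - w`, `z = u - w` and `Φ = ∑ j ∈ S, φ j`. Orthogonality of the `φ j` gives
`‖Φ‖ ^ 2 = ∑ j ∈ S, ‖φ j‖ ^ 2 = ⟪z, Φ⟫`. If `uh` were equal to `u`, Pythagoras would give
`‖x - Φ‖ ^ 2 = ‖x‖ ^ 2 - ‖Φ‖ ^ 2`. In general the defect is `2 * ⟪z - x, Φ⟫`, which is at most
`2 * ‖z - x‖ * (‖z - x‖ + ‖x‖)` because `‖Φ‖ ≤ ‖z‖`; Young's inequality with weight `δ₁` absorbs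
the mixed term.
-/

section

variable {𝕜 E ι : Type*} [RCLike 𝕜] [SeminormedAddCommGroup E] [InnerProductSpace 𝕜 E]

theorem norm_sum_sq_of_pairwise_inner_eq_zero {s : Finset ι} {f : ι → E}
    (hf : (s : Set ι).Pairwise fun i j => inner 𝕜 (f i) (f j) = 0) :
    ‖∑ i ∈ s, f i‖ ^ 2 = ∑ i ∈ s, ‖f i‖ ^ 2 := by
  have inner_sum_eq_self : ∀ i ∈ s, inner 𝕜 (f i) (∑ j ∈ s, f j) = inner 𝕜 (f i) (f i) := by
    intro i hi
    rw [inner_sum]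
    exact Finset.sum_eq_single_of_mem i hi fun j hj hji => hf hi hj hji.symm
  rw [← inner_self_eq_norm_sq (𝕜 := 𝕜), sum_inner, map_sum]
  exact Finset.sum_congr rfl fun i hi => by rw [inner_sum_eq_self i hi, inner_self_eq_norm_sq]

theorem norm_sum_sq_le_re_inner_sum {s : Finset ι} {f : ι → E} {z : E}
    (hf : (s : Set ι).Pairwise fun i j => inner 𝕜 (f i) (f j) = 0)
    (hz : ∀ i ∈ s, ‖f i‖ ^ 2 ≤ RCLike.re (inner 𝕜 z (f i))) :
    ‖∑ i ∈ s, f i‖ ^ 2 ≤ RCLike.re (inner 𝕜 z (∑ i ∈ s, f i)) := by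
  rw [norm_sum_sq_of_pairwise_inner_eq_zero hf, inner_sum, map_sum]
  exact Finset.sum_le_sum hz

theorem norm_le_of_norm_sq_le_re_inner {z y : E}
    (h : ‖y‖ ^ 2 ≤ RCLike.re (inner 𝕜 z y)) : ‖y‖ ≤ ‖z‖ := by
  rcases (norm_nonneg y).eq_or_lt with hy | hy
  · exact hy ▸ norm_nonneg z
  · refine le_of_mul_le_mul_right ?_ hy
    calc ‖y‖ * ‖y‖ = ‖y‖ ^ 2 := (sq _).symm
      _ ≤ RCLike.re (inner 𝕜 z y) := h
      _ ≤ ‖z‖ * ‖y‖ := re_inner_le_norm z y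

theorem norm_sub_sq_le_of_norm_sq_le_re_inner {z y : E}
    (h : ‖y‖ ^ 2 ≤ RCLike.re (inner 𝕜 z y)) (x : E) :
    ‖x - y‖ ^ 2 ≤ ‖x‖ ^ 2 - ‖y‖ ^ 2 + 2 * (‖z - x‖ * ‖y‖) := by
  have inner_split : RCLike.re (inner 𝕜 (z - x) y) =
      RCLike.re (inner 𝕜 z y) - RCLike.re (inner 𝕜 x y) := by
    rw [inner_sub_left, map_sub]
  have cauchy_schwarz : RCLike.re (inner 𝕜 (z - x) y) ≤ ‖z - x‖ * ‖y‖ := re_inner_le_norm _ _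
  rw [norm_sub_sq (𝕜 := 𝕜)]
  linarith

theorem norm_sub_sq_le_young_of_norm_sq_le_re_inner {z y : E}
    (h : ‖y‖ ^ 2 ≤ RCLike.re (inner 𝕜 z y)) (x : E) {δ : ℝ} (hδ : 0 < δ) :
    ‖x - y‖ ^ 2 ≤ (1 + δ) * ‖x‖ ^ 2 - ‖y‖ ^ 2 + (2 + 1 / δ) * ‖z - x‖ ^ 2 := by
  have norm_y_le : ‖y‖ ≤ ‖z - x‖ + ‖x‖ :=
    (norm_le_of_norm_sq_le_re_inner h).trans (norm_le_norm_sub_add z x)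
  have young : 2 * ‖x‖ * ‖z - x‖ ≤ δ * ‖x‖ ^ 2 + δ⁻¹ * ‖z - x‖ ^ 2 := two_mul_le_add_mul_sq hδ
  calc ‖x - y‖ ^ 2
      ≤ ‖x‖ ^ 2 - ‖y‖ ^ 2 + 2 * (‖z - x‖ * ‖y‖) := norm_sub_sq_le_of_norm_sq_le_re_inner h x
    _ ≤ ‖x‖ ^ 2 - ‖y‖ ^ 2 + 2 * (‖z - x‖ * (‖z - x‖ + ‖x‖)) := by gcongr
    _ = ‖x‖ ^ 2 - ‖y‖ ^ 2 + 2 * ‖z - x‖ ^ 2 + 2 * ‖x‖ * ‖z - x‖ := by ring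
    _ ≤ ‖x‖ ^ 2 - ‖y‖ ^ 2 + 2 * ‖z - x‖ ^ 2 + (δ * ‖x‖ ^ 2 + δ⁻¹ * ‖z - x‖ ^ 2) := by gcongr
    _ = (1 + δ) * ‖x‖ ^ 2 - ‖y‖ ^ 2 + (2 + 1 / δ) * ‖z - x‖ ^ 2 := by ring

theorem stmt_9_general {S : Finset ι} {φ : ι → E} {u uh w : E} {γ δ : ℝ}
    (horth : (S : Set ι).Pairwise fun i j => inner 𝕜 (φ i) (φ j) = 0)
    (hres : ∀ j ∈ S, ‖φ j‖ ^ 2 ≤ RCLike.re (inner 𝕜 (u - w) (φ j)))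
    (hγ : γ * ‖uh - w‖ ^ 2 ≤ ∑ j ∈ S, ‖φ j‖ ^ 2) (hδ : 0 < δ) :
    ‖uh - (w + ∑ j ∈ S, φ j)‖ ^ 2
      ≤ (1 + δ - γ) * ‖uh - w‖ ^ 2 + (2 + 1 / δ) * ‖u - uh‖ ^ 2 := by
  have estimate := norm_sub_sq_le_young_of_norm_sq_le_re_inner
    (norm_sum_sq_le_re_inner_sum horth hres) (uh - w) hδ
  rw [norm_sum_sq_of_pairwise_inner_eq_zero horth, sub_sub_sub_cancel_right, sub_sub] at estimate
  linarith

end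

/-- Abstract online convergence estimate for simultaneous enrichment on
pairwise orthogonal local spaces. -/
theorem stmt_9 {H : Type*} {ι : Type*} [NormedAddCommGroup H]
    [InnerProductSpace ℝ H] (S : Finset ι) (Vs : ι → Submodule ℝ H)
    (horth : ∀ i ∈ S, ∀ j ∈ S, i ≠ j → ∀ x ∈ Vs i, ∀ y ∈ Vs j, ⟪x, y⟫ = 0)
    (u uh w : H) (φ : ι → H) (hmem : ∀ j ∈ S, φ j ∈ Vs j)
    (hRiesz : ∀ j ∈ S, ∀ v ∈ Vs j, ⟪φ j, v⟫ = ⟪u - w, v⟫)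
    (γ : ℝ) (hγ : 0 ≤ γ) (hγle : γ * ‖uh - w‖ ^ 2 ≤ ∑ j ∈ S, ‖φ j‖ ^ 2)
    (δ₁ : ℝ) (hδ₁ : 0 < δ₁) :
    ‖uh - (w + ∑ j ∈ S, φ j)‖ ^ 2
      ≤ (1 + δ₁ - γ) * ‖uh - w‖ ^ 2 + (2 + 1 / δ₁) * ‖u - uh‖ ^ 2 :=
  stmt_9_general (𝕜 := ℝ)
    (fun i hi j hj hij => horth i hi j hj hij _ (hmem i hi) _ (hmem j hj))
    (fun j hj => by rw [← hRiesz j hj _ (hmem j hj), inner_self_eq_norm_sq]) hγle hδ₁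
end

section
/- Let H be a real inner product space, let W and V₀ be subspaces of H, and let u ∈ H. Suppose u_m ∈ W satisfies ⟨u − u_m, v⟩ = 0 for all v ∈ W, suppose φ ∈ V₀ satisfies ⟨φ, v⟩ = ⟨u − u_m, v⟩ for all v ∈ V₀, and suppose u' ∈ W + span{φ} satisfies ⟨u − u', v⟩ = 0 for all v ∈ W + span{φ}. Then ‖u − u'‖² ≤ ‖u − u_m‖² − ‖φ‖². -/
open RealInnerProductSpace

section RCLike

open scoped InnerProductSpace

variable {𝕜 E : Type*} [RCLike 𝕜] [NormedAddCommGroup E] [InnerProductSpace 𝕜 E]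

theorem norm_sub_le_norm_sub_of_forall_inner_eq_zero (K : Submodule 𝕜 E) {x p q : E}
    (hp : p ∈ K) (hq : q ∈ K) (horth : ∀ v ∈ K, ⟪x - p, v⟫_𝕜 = 0) : ‖x - p‖ ≤ ‖x - q‖ := by
  have hmin : ‖x - p‖ = ⨅ w : K, ‖x - w‖ := (K.norm_eq_iInf_iff_inner_eq_zero hp).2 horth
  have hbdd : BddBelow (Set.range fun w : K ↦ ‖x - w‖) :=
    ⟨0, Set.forall_mem_range.2 fun _ ↦ norm_nonneg _⟩
  exact hmin.trans_le (ciInf_le hbdd ⟨q, hq⟩)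

theorem norm_sub_sq_eq_sub_of_inner_self_eq {x y : E} (h : ⟪y, y⟫_𝕜 = ⟪x, y⟫_𝕜) :
    ‖x - y‖ ^ 2 = ‖x‖ ^ 2 - ‖y‖ ^ 2 := by
  have hre : RCLike.re ⟪x, y⟫_𝕜 = ‖y‖ ^ 2 := by rw [← h, inner_self_eq_norm_sq]
  rw [norm_sub_sq (𝕜 := 𝕜), hre]
  ring

theorem stmt_11_general (U V₀ : Submodule 𝕜 E) (u u_m : E) (hum : u_m ∈ U)
    (φ : E) (hφU : φ ∈ U) (hφ : φ ∈ V₀) (hRiesz : ∀ v ∈ V₀, ⟪φ, v⟫_𝕜 = ⟪u - u_m, v⟫_𝕜)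
    (u' : E) (hu' : u' ∈ U) (hGal' : ∀ v ∈ U, ⟪u - u', v⟫_𝕜 = 0) :
    ‖u - u'‖ ^ 2 ≤ ‖u - u_m‖ ^ 2 - ‖φ‖ ^ 2 :=
  calc
    ‖u - u'‖ ^ 2 ≤ ‖u - (u_m + φ)‖ ^ 2 := by
      gcongr
      exact norm_sub_le_norm_sub_of_forall_inner_eq_zero U hu' (U.add_mem hum hφU) hGal'
    _ = ‖u - u_m - φ‖ ^ 2 := by rw [sub_add_eq_sub_sub]
    _ = ‖u - u_m‖ ^ 2 - ‖φ‖ ^ 2 := norm_sub_sq_eq_sub_of_inner_self_eq (hRiesz φ hφ)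

end RCLike

/-- Online enrichment error-reduction bound for the Galerkin formulation. -/
theorem stmt_11 {H : Type*} [NormedAddCommGroup H] [InnerProductSpace ℝ H]
    (W V₀ : Submodule ℝ H) (u u_m : H) (hum : u_m ∈ W)
    (hGal : ∀ v ∈ W, ⟪u - u_m, v⟫ = 0)
    (φ : H) (hφ : φ ∈ V₀) (hRiesz : ∀ v ∈ V₀, ⟪φ, v⟫ = ⟪u - u_m, v⟫)
    (u' : H) (hu' : u' ∈ W ⊔ Submodule.span ℝ {φ})
    (hGal' : ∀ v ∈ W ⊔ Submodule.span ℝ {φ}, ⟪u - u', v⟫ = 0) :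
    ‖u - u'‖ ^ 2 ≤ ‖u - u_m‖ ^ 2 - ‖φ‖ ^ 2 :=
  stmt_11_general (W ⊔ Submodule.span ℝ {φ}) V₀ u u_m (Submodule.mem_sup_left hum) φ
    (Submodule.mem_sup_right (Submodule.mem_span_singleton_self φ)) hφ hRiesz u' hu' hGal'
end
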